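/- arXiv:2007.05145 — 2 statements merged into one kernel-verified Lean document; each statement's English description precedes it below -/
import Mathlib

section
/- Let C be a class of binary classifiers on a countable domain X with VC dimension d ≥ 2, let n ≥ 1, T ≥ 1, δ ∈ (0,1], let P be a probability distribution on X, and set ξ := (2/n)·(d(T+1)·log₂(2n) + log₂(2/δ)). Then the probability over x ∼ P^n that there exist h ∈ C and c = (c_1,…,c_T) ∈ C^T with rej_P(S(h,c)) > ξ and rej_x(S(h,c)) = 0 is at most δ. -/
open MeasureTheory

/-- A finite set `A` is shattered by `C` if every boolean labeling of `A` is
realized by some member of `C`. -/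
def Shatters {X : Type*} (C : Set (X → Bool)) (A : Finset X) : Prop :=
  ∀ b : X → Bool, ∃ g ∈ C, ∀ a ∈ A, g a = b a

/-- `C` has VC dimension `d`: some set of size `d` is shattered and no larger set is. -/
def VCDim {X : Type*} (C : Set (X → Bool)) (d : ℕ) : Prop :=
  (∃ A : Finset X, A.card = d ∧ Shatters C A) ∧ ∀ A : Finset X, Shatters C A → A.card ≤ d


open Classical in
/-- patterns -/
noncomputable def pats {X I : Type*} [Fintype I] (C : Set (X → Bool)) (w : I → X) : Finset (Finset I) :=
  Finset.univ.filter fun s => ∃ g ∈ C, ∀ p, p ∈ s ↔ g (w p) = true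

lemma sum_choose_le (m d : ℕ) (hm : 2 ≤ m) (hd : 2 ≤ d) :
    ∑ k ∈ Finset.range (d+1), m.choose k ≤ m ^ d := by
  induction d, hd using Nat.le_induction with
  | base =>
    simp only [Finset.sum_range_succ, Finset.sum_range_zero, Nat.choose_zero_right, Nat.choose_one_right, Nat.choose_two_right]
    have : m * (m-1) / 2 * 2 ≤ m * (m-1) := Nat.div_mul_le_self _ _
    obtain ⟨k, rfl⟩ := Nat.exists_eq_add_of_le hm
    have h2 : 2 + k - 1 = k + 1 := by omega
    rw [h2] at this ⊢
    nlinarith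
  | succ d hd ih =>
    rw [Finset.sum_range_succ]
    have h1 : m.choose (d+1) * 2 ≤ m ^ (d+1) := by
      have h3 := Nat.descFactorial_le_pow m (d+1)
      rw [Nat.descFactorial_eq_factorial_mul_choose] at h3
      have h4 : 2 ≤ (d+1).factorial := by
        calc 2 = Nat.factorial 2 := rfl
          _ ≤ _ := Nat.factorial_le (by omega)
      nlinarith [Nat.mul_le_mul_left (m.choose (d+1)) h4]
    have h2 : m ^ d * 2 ≤ m ^ (d+1) := by rw [pow_succ]; exact Nat.mul_le_mul_left _ hm
    omega

open Classical in
lemma pats_card {X I : Type*} [Fintype I] (C : Set (X → Bool)) (w : I → X) (d : ℕ) (hd : 2 ≤ d)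
    (hC : VCDim C d) (hI : 2 ≤ Fintype.card I) :
    (pats C w).card ≤ Fintype.card I ^ d := by
  have hv : (pats C w).vcDim ≤ d := by
    apply Finset.sup_le
    intro s hs
    rw [Finset.mem_shatterer] at hs
    have key : ∀ t ⊆ s, ∃ g ∈ C, ∀ p ∈ s, p ∈ t ↔ g (w p) = true := by
      intro t ht
      obtain ⟨u, hu, hut⟩ := hs ht
      simp only [pats, Finset.mem_filter, Finset.mem_univ, true_and] at hu
      obtain ⟨g, hg, h⟩ := hu
      refine ⟨g, hg, fun p hp => ?_⟩
      rw [← h p, ← hut]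
      simp [hp]
    have hinj : Set.InjOn w (s : Set I) := by
      intro a ha b hb hab
      obtain ⟨g, hg, h⟩ := key {a} (by simpa using ha)
      have h1 := (h a ha).1 (by simp)
      rw [hab] at h1
      have := (h b hb).2 h1
      simp at this
      exact this.symm
    rw [← Finset.card_image_of_injOn hinj]
    apply hC.2
    intro b
    obtain ⟨g, hg, h⟩ := key (s.filter fun p => b (w p) = true) (Finset.filter_subset _ _)
    refine ⟨g, hg, ?_⟩
    intro a ha
    obtain ⟨p, hp, rfl⟩ := Finset.mem_image.1 ha
    have := h p hp
    simp only [Finset.mem_filter, hp, true_and] at this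
    exact (Bool.eq_iff_iff.2 this).symm
  calc (pats C w).card ≤ (pats C w).shatterer.card := Finset.card_le_card_shatterer _
    _ ≤ ∑ k ∈ Finset.Iic (pats C w).vcDim, (Fintype.card I).choose k := Finset.card_shatterer_le_sum_vcDim
    _ ≤ ∑ k ∈ Finset.range (d+1), (Fintype.card I).choose k := by
        apply Finset.sum_le_sum_of_subset
        intro k hk
        simp only [Finset.mem_Iic, Finset.mem_range] at *
        omega
    _ ≤ _ := sum_choose_le _ _ hI hd

open Classical in
/-- one pattern -/
lemma one_pat {n : ℕ} (D : Finset (Fin n × Bool)) (s : ℝ) :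
    (((Finset.univ.filter fun σ : Fin n → Bool => (∀ i, (i, σ i) ∉ D) ∧
      s ≤ ((Finset.univ.filter fun i => (i, !σ i) ∈ D).card : ℝ)).card : ℕ) : ℝ) ≤ 2 ^ n * (2:ℝ) ^ (-s) := by
  rcases Finset.eq_empty_or_nonempty (Finset.univ.filter fun σ : Fin n → Bool => (∀ i, (i, σ i) ∉ D) ∧
      s ≤ ((Finset.univ.filter fun i => (i, !σ i) ∈ D).card : ℝ)) with h | ⟨τ, hτ⟩
  · rw [h]; simp; positivity
  · simp only [Finset.mem_filter, Finset.mem_univ, true_and] at hτ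
    obtain ⟨h1, h2⟩ := hτ
    set E := Finset.univ.filter fun i => (i, !τ i) ∈ D with hE
    have hsub : (Finset.univ.filter fun σ : Fin n → Bool => (∀ i, (i, σ i) ∉ D) ∧
      s ≤ ((Finset.univ.filter fun i => (i, !σ i) ∈ D).card : ℝ)) ⊆
      Fintype.piFinset fun i => if i ∈ E then {τ i} else Finset.univ := by
      intro σ hσ
      simp only [Finset.mem_filter, Finset.mem_univ, true_and] at hσ
      rw [Fintype.mem_piFinset]
      intro i
      split_ifs with hi
      · rw [Finset.mem_singleton]
        by_contra hne
        have h3 : (!τ i) = σ i := by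
          revert hne; cases σ i <;> cases τ i <;> simp
        simp only [hE, Finset.mem_filter, Finset.mem_univ, true_and] at hi
        rw [h3] at hi
        exact hσ.1 i hi
      · simp
    have hc := Finset.card_le_card hsub
    rw [Fintype.card_piFinset] at hc
    have hprod : (∏ i : Fin n, (if i ∈ E then ({τ i} : Finset Bool) else Finset.univ).card) * 2 ^ E.card = 2 ^ n := by
      have : (2:ℕ) ^ E.card = ∏ i : Fin n, if i ∈ E then 2 else 1 := by simp
      rw [this, ← Finset.prod_mul_distrib]
      rw [Finset.prod_congr rfl (g := fun _ => 2)]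
      · simp
      · intro i _
        by_cases hi : i ∈ E
        · rw [if_pos hi, if_pos hi, Finset.card_singleton, one_mul]
        · rw [if_neg hi, if_neg hi, Finset.card_univ, Fintype.card_bool, mul_one]
    have hp' : ((∏ i : Fin n, (if i ∈ E then ({τ i} : Finset Bool) else Finset.univ).card : ℕ) : ℝ) * (2:ℝ) ^ E.card = 2 ^ n := by
      exact_mod_cast hprod
    have h4 : (2:ℝ) ^ s ≤ (2:ℝ) ^ E.card := by
      rw [← Real.rpow_natCast]
      exact Real.rpow_le_rpow_of_exponent_le (by norm_num) h2
    have hs : (0:ℝ) < 2 ^ s := by positivity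
    rw [Real.rpow_neg (by norm_num), ← div_eq_mul_inv, le_div_iff₀ hs, ← hp']
    exact mul_le_mul (Nat.cast_le.2 hc) h4 hs.le (Nat.cast_nonneg _)

/-- ghost-sample bad event -/
def Bad {X : Type*} {n : ℕ} (C : Set (X → Bool)) (T : ℕ) (s : ℝ) (u v : Fin n → X) : Prop :=
  ∃ h ∈ C, ∃ c : Fin T → X → Bool, (∀ i, c i ∈ C) ∧ (∀ i, ∀ j, c j (u i) = h (u i)) ∧
    s ≤ (Set.ncard {i : Fin n | ¬ ∀ j, c j (v i) = h (v i)} : ℝ)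

open Classical in
lemma count_bad {X : Type*} {n : ℕ} (C : Set (X → Bool)) (T d : ℕ) (s : ℝ) (hd : 2 ≤ d)
    (hC : VCDim C d) (hn : 1 ≤ n) (w : Fin n × Bool → X) :
    (((Finset.univ.filter fun σ : Fin n → Bool =>
      Bad C T s (fun i => w (i, σ i)) (fun i => w (i, !σ i))).card : ℕ) : ℝ) ≤
      (2 * n : ℝ) ^ (d * (T + 1)) * (2 ^ n * (2:ℝ) ^ (-s)) := by
  set K := (pats C w) ×ˢ (Fintype.piFinset fun _ : Fin T => pats C w) with hK
  let D : Finset (Fin n × Bool) × (Fin T → Finset (Fin n × Bool)) → Finset (Fin n × Bool) :=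
    fun q => Finset.univ.filter fun p => ∃ j, ¬ (p ∈ q.2 j ↔ p ∈ q.1)
  have hKc : (K.card : ℝ) ≤ (2 * n : ℝ) ^ (d * (T + 1)) := by
    have h1 := pats_card C w d hd hC (by simp; omega)
    have h2 : K.card ≤ (2 * n) ^ (d * (T + 1)) := by
      rw [hK, Finset.card_product, Fintype.card_piFinset]
      simp only [Finset.prod_const, Finset.card_univ, Fintype.card_fin]
      rw [← pow_succ', pow_mul]
      apply Nat.pow_le_pow_left
      convert h1 using 2
      simp [mul_comm]
    exact_mod_cast h2
  have hsub : (Finset.univ.filter fun σ : Fin n → Bool =>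
      Bad C T s (fun i => w (i, σ i)) (fun i => w (i, !σ i))) ⊆
      K.biUnion fun q => Finset.univ.filter fun σ : Fin n → Bool => (∀ i, (i, σ i) ∉ D q) ∧
      s ≤ ((Finset.univ.filter fun i => (i, !σ i) ∈ D q).card : ℝ) := by
    intro σ hσ
    simp only [Finset.mem_filter, Finset.mem_univ, true_and] at hσ
    obtain ⟨h, hh, c, hc, h1, h2⟩ := hσ
    rw [Finset.mem_biUnion]
    refine ⟨(Finset.univ.filter fun p => h (w p) = true,
      fun j => Finset.univ.filter fun p => c j (w p) = true), ?_, ?_⟩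
    · rw [hK, Finset.mem_product, Fintype.mem_piFinset]
      constructor
      · simp only [pats, Finset.mem_filter, Finset.mem_univ, true_and]
        exact ⟨h, hh, fun p => Iff.rfl⟩
      · intro j
        simp only [pats, Finset.mem_filter, Finset.mem_univ, true_and]
        exact ⟨c j, hc j, fun p => Iff.rfl⟩
    · have hD : ∀ p, p ∈ D (Finset.univ.filter fun p => h (w p) = true,
          fun j => Finset.univ.filter fun p => c j (w p) = true) ↔ ¬ ∀ j, c j (w p) = h (w p) := by
        intro p
        simp only [D, Finset.mem_filter, Finset.mem_univ, true_and, not_forall]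
        simp only [← Bool.eq_iff_iff]
      simp only [Finset.mem_filter, Finset.mem_univ, true_and, hD]
      refine ⟨fun i => not_not.2 (h1 i), ?_⟩
      rw [← Set.ncard_coe_finset]
      convert h2 using 4
      simp
  have h1 := (Finset.card_le_card hsub).trans Finset.card_biUnion_le
  have h2 : (((Finset.univ.filter fun σ : Fin n → Bool =>
      Bad C T s (fun i => w (i, σ i)) (fun i => w (i, !σ i))).card : ℕ) : ℝ) ≤
      ∑ q ∈ K, (2 ^ n * (2:ℝ) ^ (-s)) := by
    refine (Nat.cast_le.2 h1).trans ?_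
    rw [Nat.cast_sum]
    exact Finset.sum_le_sum fun q _ => one_pat (D q) s
  refine h2.trans ?_
  rw [Finset.sum_const, nsmul_eq_mul]
  gcongr

open Classical in
lemma prob_bad {X : Type*} [Countable X] [MeasurableSpace X] [MeasurableSingletonClass X]
    {n : ℕ} (C : Set (X → Bool)) (T d : ℕ) (s : ℝ) (hd : 2 ≤ d)
    (hC : VCDim C d) (hn : 1 ≤ n) (P : Measure X) [IsProbabilityMeasure P] :
    ((Measure.pi fun _ : Fin n => P).prod (Measure.pi fun _ : Fin n => P))
      {z | Bad C T s z.1 z.2} ≤ ENNReal.ofReal ((2 * n : ℝ) ^ (d * (T + 1)) * (2:ℝ) ^ (-s)) := by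
  have hmp := measurePreserving_arrowProdEquivProdArrow X X (Fin n) (fun _ => P) (fun _ => P)
  rw [← hmp.measure_preimage (MeasurableSet.of_discrete).nullMeasurableSet]
  set ν := Measure.pi fun _ : Fin n => P.prod P with hν
  set B : Set (Fin n → X × X) :=
    (MeasurableEquiv.arrowProdEquivProdArrow X X (Fin n)) ⁻¹' {z | Bad C T s z.1 z.2} with hB
  have hBm : ∀ z, z ∈ B ↔ Bad C T s (fun i => (z i).1) (fun i => (z i).2) := fun z => Iff.rfl
  let f : Bool → X × X → X × X := fun b p => if b then p.swap else p
  have hsw : ∀ σ : Fin n → Bool, MeasurePreserving (fun (a : Fin n → X × X) i => f (σ i) (a i)) ν ν := by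
    intro σ
    apply measurePreserving_pi (fun _ => P.prod P) (fun _ => P.prod P) (f := fun i => f (σ i))
    intro i
    cases σ i
    · exact MeasurePreserving.id _
    · exact Measure.measurePreserving_swap
  have key : ∀ z : Fin n → X × X, ∑ σ : Fin n → Bool,
      ((fun (a : Fin n → X × X) i => f (σ i) (a i)) ⁻¹' B).indicator (1 : (Fin n → X × X) → ENNReal) z ≤
      ENNReal.ofReal ((2 * n : ℝ) ^ (d * (T + 1)) * (2 ^ n * (2:ℝ) ^ (-s))) := by
    intro z
    have h := count_bad C T d s hd hC hn (fun p => if p.2 then (z p.1).2 else (z p.1).1)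
    have h2 := ENNReal.ofReal_le_ofReal h
    refine le_trans (le_of_eq ?_) h2
    rw [ENNReal.ofReal_natCast, Finset.card_filter, Nat.cast_sum]
    apply Finset.sum_congr rfl
    intro σ _
    rw [Set.indicator_apply]
    have e1 : (fun i => (f (σ i) (z i)).1) = fun i => if σ i then (z i).2 else (z i).1 := by
      funext i; cases h : σ i <;> simp [f]
    have e2 : (fun i => (f (σ i) (z i)).2) = fun i => if !σ i then (z i).2 else (z i).1 := by
      funext i; cases h : σ i <;> simp [f]
    simp only [Set.mem_preimage, hBm, e1, e2, Pi.one_apply]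
    push_cast
    rfl
  have hsum : (2:ENNReal) ^ n * ν B = ∫⁻ z, ∑ σ : Fin n → Bool,
      ((fun (a : Fin n → X × X) i => f (σ i) (a i)) ⁻¹' B).indicator (1 : (Fin n → X × X) → ENNReal) z ∂ν := by
    rw [lintegral_finsetSum]
    · rw [Finset.sum_congr rfl (g := fun _ => ν B)]
      · simp
      · intro σ _
        rw [lintegral_indicator_one MeasurableSet.of_discrete]
        exact (hsw σ).measure_preimage (MeasurableSet.of_discrete).nullMeasurableSet
    · intro σ _
      exact measurable_of_countable _
  have hle : (2:ENNReal) ^ n * ν B ≤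
      ENNReal.ofReal ((2 * n : ℝ) ^ (d * (T + 1)) * (2 ^ n * (2:ℝ) ^ (-s))) := by
    rw [hsum]
    refine (lintegral_mono key).trans ?_
    rw [lintegral_const]
    simp [hν]
  have h3 : (2 * n : ℝ) ^ (d * (T + 1)) * (2 ^ n * (2:ℝ) ^ (-s)) =
     2 ^ n * ((2 * n : ℝ) ^ (d * (T + 1)) * (2:ℝ) ^ (-s)) := by ring
  rw [h3, ENNReal.ofReal_mul (by positivity), ENNReal.ofReal_pow (by norm_num)] at hle
  have h4 : ENNReal.ofReal 2 = 2 := by simp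
  rw [h4] at hle
  exact (ENNReal.mul_le_mul_iff_right (by simp) (by simp)).1 hle

/-- binomial lower tail -/
lemma tail {X : Type*} [Countable X] [MeasurableSpace X] [MeasurableSingletonClass X]
    {n : ℕ} (P : Measure X) [IsProbabilityMeasure P] (D : Set X) (s : ℝ) (hs : 5 ≤ s)
    (hp : 2 * s ≤ n * P.real D) :
    (1:ℝ) / 2 ≤ (Measure.pi fun _ : Fin n => P).real {y | s ≤ (Set.ncard {i : Fin n | y i ∈ D} : ℝ)} := by
  classical
  set μ := Measure.pi fun _ : Fin n => P with hμ
  let g : X → ℝ := fun a => if a ∈ D then 1 / 2 else 1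
  have hg : ∫ a, g a ∂P = 1 - P.real D / 2 := by
    have : g = fun a => 1 - D.indicator (fun _ => (1/2 : ℝ)) a := by
      funext a
      by_cases h : a ∈ D <;> simp [g, h]; norm_num
    rw [this, integral_sub (integrable_const _) ((integrable_const _).indicator MeasurableSet.of_discrete),
      integral_indicator_const _ MeasurableSet.of_discrete]
    simp
    ring
  have hprod : ∫ y, ∏ i, g (y i) ∂μ = (1 - P.real D / 2) ^ n := by
    rw [hμ, integral_fintype_prod_eq_pow, hg]; simp
  have hval : ∀ y : Fin n → X, ∏ i, g (y i) = (2:ℝ) ^ (-(Set.ncard {i : Fin n | y i ∈ D} : ℝ)) := by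
    intro y
    simp only [g]
    rw [Finset.prod_ite]
    simp only [Finset.prod_const, one_pow, mul_one]
    rw [Real.rpow_neg (by norm_num), Real.rpow_natCast, ← Set.ncard_coe_finset]
    simp
  have hint : Integrable (fun y : Fin n → X => ∏ i, g (y i)) μ := by
    apply Integrable.of_bound (C := 1) (measurable_of_countable _).aestronglyMeasurable
    filter_upwards with y
    rw [hval, Real.norm_of_nonneg (by positivity)]
    apply Real.rpow_le_one_of_one_le_of_nonpos (by norm_num) (by simp)
  have hmk := mul_meas_ge_le_integral_of_nonneg (μ := μ) (f := fun y : Fin n → X => ∏ i, g (y i))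
    (by filter_upwards with y; simp only [Pi.zero_apply]; rw [hval]; positivity) hint ((2:ℝ) ^ (-s))
  rw [hprod] at hmk
  have hPD : P.real D ≤ 1 := measureReal_le_one
  have hexp : (1 - P.real D / 2) ^ n ≤ Real.exp (-s) := by
    have h1 : 1 - P.real D / 2 ≤ Real.exp (-(P.real D / 2)) := by
      have := Real.add_one_le_exp (-(P.real D / 2)); linarith
    calc _ ≤ (Real.exp (-(P.real D / 2))) ^ n := pow_le_pow_left₀ (by linarith) h1 n
      _ = Real.exp (n * (-(P.real D / 2))) := (Real.exp_nat_mul _ _).symm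
      _ ≤ _ := Real.exp_le_exp.2 (by linarith)
  have hnum : Real.exp (-s) ≤ (2:ℝ) ^ (-s) * (1/2) := by
    have h2 : (2:ℝ) ^ (-s) * (1/2) = Real.exp (Real.log 2 * (-s) - Real.log 2) := by
      rw [Real.exp_sub, Real.exp_log (by norm_num), Real.rpow_def_of_pos (by norm_num)]; ring
    rw [h2]
    apply Real.exp_le_exp.2
    nlinarith [Real.log_two_lt_d9]
  set F := {y : Fin n → X | (2:ℝ) ^ (-s) ≤ ∏ i, g (y i)} with hF
  have hFle : μ.real F ≤ 1 / 2 := by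
    have : (2:ℝ) ^ (-s) * μ.real F ≤ (2:ℝ) ^ (-s) * (1/2) := hmk.trans (hexp.trans hnum)
    exact le_of_mul_le_mul_left this (by positivity)
  have hcompl : Fᶜ ⊆ {y | s ≤ (Set.ncard {i : Fin n | y i ∈ D} : ℝ)} := by
    intro y hy
    simp only [hF, Set.mem_compl_iff, Set.mem_setOf_eq, not_le, hval] at hy ⊢
    rw [Real.rpow_lt_rpow_left_iff (by norm_num)] at hy
    linarith
  have h5 : μ.real Fᶜ = 1 - μ.real F := probReal_compl_eq_one_sub MeasurableSet.of_discrete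
  have h6 := measureReal_mono (μ := μ) hcompl
  linarith

/-- for a class `C` of VC dimension `d ≥ 2`, `n ≥ 1`, `T ≥ 1`, `δ ∈ (0,1]`,
distribution `P`, and `ξ = (2/n)(d(T+1)log₂(2n) + log₂(2/δ))`: the probability over
`x ∼ Pⁿ` that some `h ∈ C`, `c ∈ C^T` have `rej_P(S(h,c)) > ξ` and `rej_x(S(h,c)) = 0`
is at most `δ`. -/
theorem stmt9 {X : Type*} [Countable X] [MeasurableSpace X] [MeasurableSingletonClass X]
    (C : Set (X → Bool)) (d : ℕ) (hd : 2 ≤ d) (hC : VCDim C d)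
    (n T : ℕ) (hn : 1 ≤ n) (hT : 1 ≤ T)
    (δ : ℝ) (hδ0 : 0 < δ) (hδ1 : δ ≤ 1)
    (P : Measure X) [IsProbabilityMeasure P] (ξ : ℝ)
    (hξ : ξ = (2 / (n : ℝ)) *
      ((d : ℝ) * ((T : ℝ) + 1) * Real.logb 2 (2 * n) + Real.logb 2 (2 / δ))) :
    ((Measure.pi fun _ : Fin n => P)
      {x : Fin n → X | ∃ h ∈ C, ∃ c : Fin T → X → Bool, (∀ i, c i ∈ C) ∧
        ξ < (P {a : X | ∀ j, c j a = h a}ᶜ).toReal ∧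
        (Set.ncard {i : Fin n | x i ∉ {a : X | ∀ j, c j a = h a}} : ℝ) / n = 0}).toReal
      ≤ δ := by
  have hn' : (1:ℝ) ≤ n := by exact_mod_cast hn
  set μ := Measure.pi fun _ : Fin n => P with hμ
  set A := {x : Fin n → X | ∃ h ∈ C, ∃ c : Fin T → X → Bool, (∀ i, c i ∈ C) ∧
        ξ < (P {a : X | ∀ j, c j a = h a}ᶜ).toReal ∧
        (Set.ncard {i : Fin n | x i ∉ {a : X | ∀ j, c j a = h a}} : ℝ) / n = 0} with hA
  set s := (d : ℝ) * ((T : ℝ) + 1) * Real.logb 2 (2 * n) + Real.logb 2 (2 / δ) with hs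
  have hns : n * ξ = 2 * s := by rw [hξ]; field_simp
  have hlog1 : 1 ≤ Real.logb 2 (2 * n) := by
    rw [Real.le_logb_iff_rpow_le (by norm_num) (by positivity), Real.rpow_one]; linarith
  have hlog2 : 1 ≤ Real.logb 2 (2 / δ) := by
    rw [Real.le_logb_iff_rpow_le (by norm_num) (by positivity), Real.rpow_one,
      le_div_iff₀ hδ0]; linarith
  have hd' : (2:ℝ) ≤ d := by exact_mod_cast hd
  have hT' : (1:ℝ) ≤ T := by exact_mod_cast hT
  have hs5 : 5 ≤ s := by
    have : 4 ≤ (d : ℝ) * ((T : ℝ) + 1) := by nlinarith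
    rw [hs]; nlinarith
  have hpow : (2:ℝ) ^ s = (2 * n : ℝ) ^ (d * (T + 1)) * (2 / δ) := by
    rw [hs, Real.rpow_add (by norm_num), Real.rpow_logb (by norm_num) (by norm_num) (by positivity),
      mul_comm ((d:ℝ) * _), Real.rpow_mul (by norm_num),
      Real.rpow_logb (by norm_num) (by norm_num) (by positivity)]
    congr 1
    rw [← Real.rpow_natCast]
    push_cast
    rfl
  have hbad := prob_bad (n := n) C T d s hd hC hn P
  have hfin : (2 * n : ℝ) ^ (d * (T + 1)) * (2:ℝ) ^ (-s) = δ / 2 := by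
    rw [Real.rpow_neg (by norm_num), hpow]
    field_simp
  rw [hfin, Measure.prod_apply MeasurableSet.of_discrete] at hbad
  have hlow : ENNReal.ofReal (1 / 2) * μ A ≤
      ∫⁻ x, μ (Prod.mk x ⁻¹' {z : (Fin n → X) × (Fin n → X) | Bad C T s z.1 z.2}) ∂μ := by
    rw [← setLIntegral_const]
    refine le_trans ?_ (setLIntegral_le_lintegral A _)
    apply setLIntegral_mono' MeasurableSet.of_discrete
    rintro x ⟨h, hh, c, hc, h1, h2⟩
    have hx : ∀ i, ∀ j, c j (x i) = h (x i) := by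
      rw [div_eq_zero_iff] at h2
      rcases h2 with h2 | h2
      · rw [Nat.cast_eq_zero, Set.ncard_eq_zero] at h2
        intro i
        by_contra hi
        have : i ∈ ({i : Fin n | x i ∉ {a : X | ∀ j, c j a = h a}} : Set (Fin n)) := hi
        rw [h2] at this
        exact this
      · linarith
    have ht := tail (n := n) P {a : X | ∀ j, c j a = h a}ᶜ s hs5 (by
      rw [← hns]
      exact mul_le_mul_of_nonneg_left h1.le (by positivity))
    rw [ENNReal.ofReal_le_iff_le_toReal (measure_ne_top _ _)]
    refine ht.trans (measureReal_mono (μ := μ) ?_)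
    intro y hy
    exact ⟨h, hh, c, hc, hx, hy⟩
  have hfinal := hlow.trans hbad
  have h7 : 1 / 2 * (μ A).toReal ≤ δ / 2 := by
    have := ENNReal.toReal_mono ENNReal.ofReal_ne_top hfinal
    rwa [ENNReal.toReal_mul, ENNReal.toReal_ofReal (by norm_num), ENNReal.toReal_ofReal (by positivity)] at this
  linarith
end

section
/- Let C be a class of binary classifiers on a countable domain X with VC dimension d ≥ 2, let n ≥ 1, T ≥ 1, δ ∈ (0,1], let P be a probability distribution on X, and let α ≥ (8/n)·(d(T+1)·ln(2n) + ln(8/δ)). Then the probability over x ∼ P^n that there exist h ∈ C and c = (c_1,…,c_T) ∈ C^T with rej_P(S(h,c)) > 2α and rej_x(S(h,c)) ≤ α is at most δ. -/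
open MeasureTheory

lemma sauer_num (m : ℕ) (hm : 2 ≤ m) (d : ℕ) (hd : 2 ≤ d) :
    ∑ k ∈ Finset.Iic d, m.choose k ≤ m ^ d := by
  have e : Finset.Iic d = Finset.range (d+1) := by ext; simp
  rw [e]
  induction d, hd using Nat.le_induction with
  | base =>
    simp [Finset.sum_range_succ]
    obtain ⟨k, rfl⟩ := Nat.exists_eq_add_of_le hm
    have h := Nat.triangle_succ (k+1)
    have h2 : (2 + k).choose 2 * 2 = (2+k) * (k+1) := by
      rw [Nat.choose_two_right, Nat.div_mul_cancel]
      · congr 1; omega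
      · exact (Nat.even_mul_pred_self _).two_dvd
    nlinarith
  | succ d hd ih =>
    have ih := ih (by ext; simp)
    rw [Finset.sum_range_succ]
    have h1 : m.choose (d+1) * 2 ≤ m ^ (d+1) := by
      have h3 := Nat.choose_le_pow_div (α := ℚ) (d+1) m
      have h2 : (2:ℚ) ≤ ((d+1).factorial : ℚ) := by
        have : 2 ≤ (d+1).factorial := by
          calc 2 ≤ d + 1 := by omega
            _ ≤ _ := Nat.self_le_factorial _
        exact_mod_cast this
      rw [le_div_iff₀ (by positivity)] at h3
      have : (m.choose (d+1) : ℚ) * 2 ≤ (m:ℚ) ^ (d+1) := by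
        refine le_trans ?_ h3
        gcongr
      exact_mod_cast this
    have h2 : m ^ d * 2 ≤ m ^ (d+1) := by
      rw [pow_succ]; gcongr
    omega

open Classical in
noncomputable def lo (p : Prop) : ENNReal := if p then 2/3 else 1
open Classical in
noncomputable def hi (p : Prop) : ENNReal := if p then 4/3 else 1

lemma prod_lo {n : ℕ} (ρ : Fin n → Prop) :
    ∏ i, lo (ρ i) = (2/3) ^ Set.ncard {i | ρ i} := by
  classical
  have h : ∀ i, lo (ρ i) = if ρ i then 2/3 else 1 := fun i => by
    unfold lo; congr
  simp_rw [h]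
  rw [Finset.prod_ite, Finset.prod_const_one, mul_one, Finset.prod_const,
    Set.ncard_eq_toFinset_card']
  congr 2
  ext i
  simp

lemma lohi (p q : Prop) : lo p * hi q + lo q * hi p ≤ 2 := by
  have h : ∀ a b : ℝ, 0 ≤ a → 0 < b → ENNReal.ofReal a / ENNReal.ofReal b = ENNReal.ofReal (a/b) :=
    fun a b _ hb => (ENNReal.ofReal_div_of_pos hb).symm
  have h1 : (2/3 : ENNReal) = ENNReal.ofReal (2/3) := by rw [← h]; all_goals norm_num
  have h2 : (4/3 : ENNReal) = ENNReal.ofReal (4/3) := by rw [← h]; all_goals norm_num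
  have h3 : (2 : ENNReal) = ENNReal.ofReal 2 := by norm_num
  have h4 : (1 : ENNReal) = ENNReal.ofReal 1 := by norm_num
  unfold lo hi
  rw [h1, h2, h3, h4]
  split_ifs <;> simp only [← ENNReal.ofReal_mul (show (0:ℝ) ≤ 2/3 by norm_num),
    ← ENNReal.ofReal_mul (show (0:ℝ) ≤ 1 by norm_num)] <;>
    rw [← ENNReal.ofReal_add (by norm_num) (by norm_num)] <;>
    apply ENNReal.ofReal_le_ofReal <;> norm_num

def sw {ι : Type*} (σ : ι → Bool) : Equiv.Perm (ι ⊕ ι) where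
  toFun := fun s => s.elim (fun i => if σ i then Sum.inr i else Sum.inl i)
    (fun i => if σ i then Sum.inl i else Sum.inr i)
  invFun := fun s => s.elim (fun i => if σ i then Sum.inr i else Sum.inl i)
    (fun i => if σ i then Sum.inl i else Sum.inr i)
  left_inv := by rintro (i | i) <;> by_cases h : σ i <;> simp [h]
  right_inv := by rintro (i | i) <;> by_cases h : σ i <;> simp [h]

open Classical in
lemma swap_sum {n : ℕ} (ρ : Fin n ⊕ Fin n → Prop) :
    ∑ σ : Fin n → Bool, ∏ i, lo (ρ (sw σ (Sum.inl i))) * hi (ρ (sw σ (Sum.inr i))) ≤ 2 ^ n := by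
  let f : Fin n → Bool → ENNReal := fun i s =>
    if s then lo (ρ (Sum.inr i)) * hi (ρ (Sum.inl i)) else lo (ρ (Sum.inl i)) * hi (ρ (Sum.inr i))
  have h : ∀ σ : Fin n → Bool, ∏ i, lo (ρ (sw σ (Sum.inl i))) * hi (ρ (sw σ (Sum.inr i)))
      = ∏ i, f i (σ i) := by
    intro σ
    refine Finset.prod_congr rfl fun i _ => ?_
    by_cases h : σ i <;> simp [sw, f, h]
  simp_rw [h]
  have := Finset.prod_univ_sum (fun _ : Fin n => (Finset.univ : Finset Bool)) f
  rw [Fintype.piFinset_univ] at this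
  rw [← this]
  calc _ ≤ ∏ i : Fin n, (2 : ENNReal) := by
        refine Finset.prod_le_prod' fun i _ => ?_
        simp [f]
        exact lohi _ _
    _ = _ := by simp

/-- traces -/
noncomputable def trc {X : Type*} {ι : Type*} [Fintype ι] (z : ι → X) (g : X → Bool) : Finset ι :=
  Finset.univ.filter fun i => g (z i) = true

open Classical in
noncomputable def trcs {X : Type*} {ι : Type*} [Fintype ι] (z : ι → X) (C : Set (X → Bool)) :
    Finset (Finset ι) :=
  Finset.univ.filter fun A => ∃ g ∈ C, A = trc z g

open Classical in
lemma card_trcs {X : Type*} {ι : Type*} [Fintype ι] (z : ι → X) (C : Set (X → Bool)) (d : ℕ)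
    (hd : 2 ≤ d) (hC : VCDim C d) (hι : 2 ≤ Fintype.card ι) :
    (trcs z C).card ≤ Fintype.card ι ^ d := by
  refine le_trans (Finset.card_le_card_shatterer _) ?_
  refine le_trans Finset.card_shatterer_le_sum_vcDim ?_
  refine le_trans ?_ (sauer_num _ hι d hd)
  apply Finset.sum_le_sum_of_subset
  apply Finset.Iic_subset_Iic.2
  apply Finset.sup_le
  intro B hB
  rw [Finset.mem_shatterer] at hB
  have key : ∀ t ⊆ B, ∃ g ∈ C, ∀ i ∈ B, (g (z i) = true ↔ i ∈ t) := by
    intro t ht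
    obtain ⟨u, hu, hut⟩ := hB ht
    simp only [trcs, Finset.mem_filter, Finset.mem_univ, true_and] at hu
    obtain ⟨g, hg, rfl⟩ := hu
    refine ⟨g, hg, fun i hi => ?_⟩
    rw [← hut]
    simp [trc, hi]
  have inj : Set.InjOn z B := by
    intro i hi j hj hij
    obtain ⟨g, -, hg⟩ := key {i} (by simpa using hi)
    have h1 := hg i hi
    have h2 := hg j hj
    rw [← hij, h1] at h2
    simpa [eq_comm] using h2
  rw [← Finset.card_image_of_injOn inj]
  apply hC.2
  intro b
  obtain ⟨g, hg, h⟩ := key (B.filter fun i => b (z i) = true) (Finset.filter_subset _ _)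
  refine ⟨g, hg, ?_⟩
  simp only [Finset.mem_image, forall_exists_index, and_imp]
  rintro _ i hi rfl
  have := h i hi
  simp only [Finset.mem_filter, hi, true_and] at this
  exact Bool.eq_iff_iff.2 this

open Classical in
/-- the sup weight -/
noncomputable def FF {X : Type*} (C : Set (X → Bool)) (n T : ℕ) (z : Fin n ⊕ Fin n → X) : ENNReal :=
  ⨆ k : C × (Fin T → C), ∏ i, lo (∃ j, (k.2 j).1 (z (Sum.inl i)) ≠ k.1.1 (z (Sum.inl i))) *
    hi (∃ j, (k.2 j).1 (z (Sum.inr i)) ≠ k.1.1 (z (Sum.inr i)))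

open Classical in
lemma FF_sum {X : Type*} (C : Set (X → Bool)) (d n T : ℕ) (hd : 2 ≤ d) (hC : VCDim C d)
    (hn : 1 ≤ n) (z : Fin n ⊕ Fin n → X) :
    ∑ σ : Fin n → Bool, FF C n T (fun i => z (sw σ i)) ≤
      2 ^ n * ((2 * n : ℕ) : ENNReal) ^ (d * (T+1)) := by
  let K := trcs z C × (Fin T → trcs z C)
  let ρ : K → Fin n ⊕ Fin n → Prop := fun k i => ∃ j, ¬ (i ∈ (k.2 j).1 ↔ i ∈ k.1.1)
  have hb : ∀ σ : Fin n → Bool, FF C n T (fun i => z (sw σ i)) ≤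
      ∑ k : K, ∏ i, lo (ρ k (sw σ (Sum.inl i))) * hi (ρ k (sw σ (Sum.inr i))) := by
    intro σ
    refine iSup_le fun k => ?_
    have hm : ∀ g : C, trc z g.1 ∈ trcs z C := fun g => by
      simp only [trcs, Finset.mem_filter, Finset.mem_univ, true_and]
      exact ⟨g.1, g.2, rfl⟩
    let k' : K := (⟨trc z k.1.1, hm k.1⟩, fun j => ⟨trc z (k.2 j).1, hm (k.2 j)⟩)
    have hρ : ∀ i, ρ k' i ↔ ∃ j, (k.2 j).1 (z i) ≠ k.1.1 (z i) := by
      intro i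
      simp only [ρ, k', trc, Finset.mem_filter, Finset.mem_univ, true_and, ne_eq]
      refine exists_congr fun j => not_congr ?_
      exact Bool.eq_iff_iff.symm
    refine le_trans (le_of_eq ?_) (Finset.single_le_sum (f := fun k : K =>
      ∏ i, lo (ρ k (sw σ (Sum.inl i))) * hi (ρ k (sw σ (Sum.inr i))))
      (fun _ _ => zero_le) (Finset.mem_univ k'))
    simp only [hρ]
  refine le_trans (Finset.sum_le_sum fun σ _ => hb σ) ?_
  rw [Finset.sum_comm]
  refine le_trans (Finset.sum_le_sum fun k _ => swap_sum (ρ k)) ?_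
  rw [Finset.sum_const, nsmul_eq_mul, mul_comm]
  gcongr
  have hc := card_trcs z C d hd hC (by simp; omega)
  have h2 : Fintype.card (Fin n ⊕ Fin n) = 2 * n := by simp; omega
  rw [h2] at hc
  have : (Finset.univ : Finset K).card ≤ (2 * n) ^ (d * (T+1)) := by
    simp only [Finset.card_univ, K, Fintype.card_prod, Fintype.card_fun, Fintype.card_coe, Fintype.card_fin]
    rw [← pow_succ', pow_mul]
    gcongr
  exact_mod_cast this

lemma FF_int {X : Type*} [Countable X] [MeasurableSpace X] [MeasurableSingletonClass X]
    (C : Set (X → Bool)) (d n T : ℕ) (hd : 2 ≤ d) (hC : VCDim C d)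
    (hn : 1 ≤ n) (P : Measure X) [IsProbabilityMeasure P] :
    ∫⁻ z, FF C n T z ∂(Measure.pi fun _ : Fin n ⊕ Fin n => P) ≤
      ((2 * n : ℕ) : ENNReal) ^ (d * (T+1)) := by
  have meas : ∀ f : (Fin n ⊕ Fin n → X) → ENNReal, Measurable f := fun f => measurable_of_countable f
  have hσ : ∀ σ : Fin n → Bool, ∫⁻ z, FF C n T (fun i => z (sw σ i)) ∂(Measure.pi fun _ : Fin n ⊕ Fin n => P)
      = ∫⁻ z, FF C n T z ∂(Measure.pi fun _ : Fin n ⊕ Fin n => P) := by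
    intro σ
    have h := measurePreserving_piCongrLeft (fun _ : Fin n ⊕ Fin n => P) (sw σ)
    rw [← h.lintegral_comp (meas _)]
    refine lintegral_congr fun z => ?_
    congr 1
    ext i
    rw [MeasurableEquiv.coe_piCongrLeft, Equiv.piCongrLeft_apply_apply]
  have h1 : ∑ σ : Fin n → Bool, ∫⁻ z, FF C n T (fun i => z (sw σ i)) ∂(Measure.pi fun _ : Fin n ⊕ Fin n => P)
      ≤ 2 ^ n * ((2 * n : ℕ) : ENNReal) ^ (d * (T+1)) := by
    rw [← lintegral_finsetSum _ (fun _ _ => meas _)]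
    refine le_trans (lintegral_mono fun z => FF_sum C d n T hd hC hn z) ?_
    simp
  simp only [hσ] at h1
  rw [Finset.sum_const, nsmul_eq_mul] at h1
  have h2 : (((Finset.univ : Finset (Fin n → Bool)).card : ℕ) : ENNReal) = 2 ^ n := by simp
  rw [h2] at h1
  exact (ENNReal.mul_le_mul_iff_right (by simp) (by simp)).1 h1

lemma lint_prod {X : Type*} [Countable X] [MeasurableSpace X] [MeasurableSingletonClass X]
    (n : ℕ) (P : Measure X) [IsProbabilityMeasure P] (f : X → ENNReal) :
    ∫⁻ x, ∏ i, f (x i) ∂(Measure.pi fun _ : Fin n => P) = (∫⁻ a, f a ∂P) ^ n := by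
  have hf : Measurable f := measurable_of_countable f
  have := ProbabilityTheory.iIndepFun_pi (μ := fun _ : Fin n => P) (X := fun _ => f) (fun _ => hf.aemeasurable)
  rw [ProbabilityTheory.lintegral_prod_eq_prod_lintegral_of_indepFun Finset.univ
    (fun (i : Fin n) (x : Fin n → X) => f (x i)) this (fun i => by fun_prop)]
  have h : ∀ i : Fin n, ∫⁻ x : Fin n → X, f (x i) ∂(Measure.pi fun _ : Fin n => P) = ∫⁻ a, f a ∂P := by
    intro i
    exact (measurePreserving_eval (fun _ : Fin n => P) i).lintegral_comp hf
  simp [h]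

lemma num_lower (n a : ℕ) (α p : ℝ) (h0 : 0 ≤ α) (hα : α ≤ 1/2) (hp : 2 * α ≤ p) (ha : (a:ℝ) ≤ α * n) :
    Real.exp (α * n / 8) ≤ (2/3) ^ a * (1 + p / 3) ^ n := by
  have h1 : Real.exp (-(43/100)) ≤ 2/3 := by
    have := Real.quadratic_le_exp_of_nonneg (x := 43/100) (by norm_num)
    rw [Real.exp_neg]
    rw [inv_le_comm₀ (Real.exp_pos _) (by norm_num)]
    norm_num at this ⊢
    linarith
  have h2 : Real.exp (4 * α / 7) ≤ 1 + p / 3 := by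
    refine le_trans ?_ (show 1 + 2 * α / 3 ≤ 1 + p / 3 by linarith)
    rw [← Real.le_log_iff_exp_le (by positivity)]
    refine le_trans ?_ (Real.le_log_one_add_of_nonneg (by positivity))
    rw [le_div_iff₀ (by positivity)]
    nlinarith
  calc _ ≤ Real.exp (-(43/100)) ^ a * Real.exp (4 * α / 7) ^ n := by
        rw [← Real.exp_nat_mul, ← Real.exp_nat_mul, ← Real.exp_add]
        apply Real.exp_le_exp.2
        have : 0 ≤ α * n := by positivity
        nlinarith
    _ ≤ _ := by gcongr

/-- for a class `C` of VC dimension `d ≥ 2`, `n ≥ 1`, `T ≥ 1`,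
`δ ∈ (0,1]`, distribution `P`, and `α ≥ (8/n)(d(T+1)ln(2n) + ln(8/δ))`: the probability
over `x ∼ Pⁿ` that some `h ∈ C`, `c ∈ C^T` have `rej_P(S(h,c)) > 2α` and
`rej_x(S(h,c)) ≤ α` is at most `δ`. -/
theorem stmt10 {X : Type*} [Countable X] [MeasurableSpace X] [MeasurableSingletonClass X]
    (C : Set (X → Bool)) (d : ℕ) (hd : 2 ≤ d) (hC : VCDim C d)
    (n T : ℕ) (hn : 1 ≤ n) (hT : 1 ≤ T)
    (δ : ℝ) (hδ0 : 0 < δ) (hδ1 : δ ≤ 1)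
    (P : Measure X) [IsProbabilityMeasure P] (α : ℝ)
    (hα : (8 / (n : ℝ)) *
      ((d : ℝ) * ((T : ℝ) + 1) * Real.log (2 * n) + Real.log (8 / δ)) ≤ α) :
    ((Measure.pi fun _ : Fin n => P)
      {x : Fin n → X | ∃ h ∈ C, ∃ c : Fin T → X → Bool, (∀ i, c i ∈ C) ∧
        2 * α < (P {a : X | ∀ j, c j a = h a}ᶜ).toReal ∧
        (Set.ncard {i : Fin n | x i ∉ {a : X | ∀ j, c j a = h a}} : ℝ) / n ≤ α}).toReal
      ≤ δ := by
  classical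
  have hn0 : (0:ℝ) < n := by exact_mod_cast hn
  have hL1 : 0 ≤ Real.log (2 * n) := Real.log_nonneg (by
    have : (1:ℝ) ≤ n := by exact_mod_cast hn
    linarith)
  have hL2 : 0 ≤ Real.log (8 / δ) := Real.log_nonneg (by
    rw [le_div_iff₀ hδ0]; linarith)
  have hα0 : 0 ≤ α := le_trans (by positivity) hα
  have hαn : (d : ℝ) * ((T : ℝ) + 1) * Real.log (2 * n) + Real.log (8 / δ) ≤ α * n / 8 := by
    rw [div_mul_eq_mul_div, div_le_iff₀ hn0] at hα
    linarith
  set B := {x : Fin n → X | ∃ h ∈ C, ∃ c : Fin T → X → Bool, (∀ i, c i ∈ C) ∧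
        2 * α < (P {a : X | ∀ j, c j a = h a}ᶜ).toReal ∧
        (Set.ncard {i : Fin n | x i ∉ {a : X | ∀ j, c j a = h a}} : ℝ) / n ≤ α} with hB
  set μ := Measure.pi fun _ : Fin n => P with hμ
  let F' : (Fin n → X) → (Fin n → X) → ENNReal := fun x y => FF C n T (Sum.elim x y)
  have hint : ∫⁻ x, ∫⁻ y, F' x y ∂μ ∂μ ≤ ((2 * n : ℕ) : ENNReal) ^ (d * (T+1)) := by
    refine le_trans (le_of_eq ?_) (FF_int C d n T hd hC hn P)
    have h := measurePreserving_sumPiEquivProdPi_symm (fun _ : Fin n ⊕ Fin n => P)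
    rw [← h.lintegral_comp (measurable_of_countable _),
      lintegral_prod _ (measurable_of_countable _).aemeasurable]
    refine lintegral_congr fun x => lintegral_congr fun y => ?_
    simp only [F']
    congr 1
  have hlow : ∀ x ∈ B, ENNReal.ofReal (Real.exp (α * n / 8)) ≤ ∫⁻ y, F' x y ∂μ := by
    rintro x ⟨h, hh, c, hc, hp, ha⟩
    set p := (P {a : X | ∀ j, c j a = h a}ᶜ).toReal with hpdef
    set a := Set.ncard {i : Fin n | x i ∉ {a : X | ∀ j, c j a = h a}} with hadef
    have hp1 : p ≤ 1 := by
      rw [hpdef]; exact measureReal_le_one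
    have key := num_lower n a α p hα0 (by linarith) hp.le (by rwa [div_le_iff₀ hn0] at ha)
    refine le_trans (ENNReal.ofReal_le_ofReal key) ?_
    have e1 : ∏ i, lo (∃ j, c j (x i) ≠ h (x i)) = ENNReal.ofReal ((2/3) ^ a) := by
      have h23 : (2/3 : ENNReal) = ENNReal.ofReal (2/3) := by
        rw [ENNReal.ofReal_div_of_pos (by norm_num)]; norm_num
      rw [prod_lo (fun i => ∃ j, c j (x i) ≠ h (x i)), h23, ENNReal.ofReal_pow (by norm_num), hadef]
      congr 2
      ext i
      simp
    have e2 : ∫⁻ b, hi (∃ j, c j b ≠ h b) ∂P = ENNReal.ofReal (1 + p / 3) := by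
      have hs : MeasurableSet {a : X | ∀ j, c j a = h a}ᶜ := Set.to_countable _ |>.measurableSet
      have hf : ∀ b, hi (∃ j, c j b ≠ h b) = 1 +
          Set.indicator {a : X | ∀ j, c j a = h a}ᶜ (fun _ => (ENNReal.ofReal (1/3))) b := by
        intro b
        by_cases hb : ∃ j, c j b ≠ h b
        · have hb' : b ∈ {a : X | ∀ j, c j a = h a}ᶜ := by simpa using hb
          rw [Set.indicator_of_mem hb']
          simp only [hi, hb, if_true]
          rw [show (1:ENNReal) = ENNReal.ofReal 1 by simp,
            ← ENNReal.ofReal_add (by norm_num) (by norm_num),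
            show (1:ℝ) + 1/3 = 4/3 by norm_num, ENNReal.ofReal_div_of_pos (by norm_num)]
          norm_num
        · have hb' : b ∉ {a : X | ∀ j, c j a = h a}ᶜ := by simpa using hb
          rw [Set.indicator_of_notMem hb']
          simp only [hi, hb, if_false, add_zero]
      simp_rw [hf]
      rw [lintegral_add_left measurable_const, lintegral_indicator_const hs]
      rw [ENNReal.ofReal_add (by norm_num) (by positivity), hpdef,
        show (P {a : X | ∀ j, c j a = h a}ᶜ).toReal / 3 =
          1/3 * (P {a : X | ∀ j, c j a = h a}ᶜ).toReal by ring, ENNReal.ofReal_mul (by norm_num),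
        ENNReal.ofReal_toReal (measure_ne_top _ _)]
      simp
    rw [ENNReal.ofReal_mul (by positivity), ← e1, ENNReal.ofReal_pow (by positivity), ← e2,
      ← lint_prod n P, ← lintegral_const_mul _ (measurable_of_countable _)]
    refine lintegral_mono fun y => ?_
    rw [← Finset.prod_mul_distrib]
    exact le_iSup (fun k : C × (Fin T → C) =>
      ∏ i, lo (∃ j, (k.2 j).1 (Sum.elim x y (Sum.inl i)) ≠ k.1.1 (Sum.elim x y (Sum.inl i))) *
      hi (∃ j, (k.2 j).1 (Sum.elim x y (Sum.inr i)) ≠ k.1.1 (Sum.elim x y (Sum.inr i))))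
      (⟨h, hh⟩, fun j => ⟨c j, hc j⟩)
  have hBm : MeasurableSet B := Set.to_countable _ |>.measurableSet
  have hmain : ENNReal.ofReal (Real.exp (α * n / 8)) * μ B ≤
      ((2 * n : ℕ) : ENNReal) ^ (d * (T+1)) := by
    refine le_trans ?_ hint
    rw [← lintegral_indicator_const hBm]
    refine lintegral_mono fun x => ?_
    by_cases hx : x ∈ B
    · rw [Set.indicator_of_mem hx]; exact hlow x hx
    · rw [Set.indicator_of_notMem hx]; exact zero_le
  have hreal : Real.exp (α * n / 8) * (μ B).toReal ≤ (2 * n : ℝ) ^ (d * (T+1)) := by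
    have := ENNReal.toReal_mono (by finiteness) hmain
    rw [ENNReal.toReal_mul, ENNReal.toReal_ofReal (Real.exp_pos _).le] at this
    simpa using this
  have hexp : (2 * n : ℝ) ^ (d * (T+1)) * (8 / δ) ≤ Real.exp (α * n / 8) := by
    refine le_trans (le_of_eq ?_) (Real.exp_le_exp.2 hαn)
    rw [Real.exp_add, Real.exp_log (by positivity)]
    congr 1
    rw [← Real.rpow_natCast, Real.rpow_def_of_pos (by positivity)]
    push_cast
    ring_nf
  have hN : 0 < (2 * n : ℝ) ^ (d * (T+1)) := by positivity
  set N := (2 * n : ℝ) ^ (d * (T+1))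
  have hm0 : 0 ≤ (μ B).toReal := ENNReal.toReal_nonneg
  have h1 : N * ((8 / δ) * (μ B).toReal) ≤ N * 1 := by
    calc _ = N * (8 / δ) * (μ B).toReal := by ring
      _ ≤ Real.exp (α * n / 8) * (μ B).toReal := by gcongr
      _ ≤ N * 1 := by linarith
  have h2 := le_of_mul_le_mul_left h1 hN
  rw [div_mul_eq_mul_div, div_le_iff₀ hδ0] at h2
  linarith
end
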